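/- Let N ≥ 1 be an integer, P_s > 0, σ_w² > 0 and z ≥ 0 be reals, and define the log-likelihood f(v) = −N · ln(π (v P_s + σ_w²)) − z/(v P_s + σ_w²) for v ≥ 0. Then f attains its maximum over [0, ∞) at v* = max(0, z/(N P_s) − σ_w²/P_s); that is, f(v) ≤ f(v*) for all v ≥ 0. -/

import Mathlib

/-- A sufficient condition for `s` to be at least as likely as `t` under the log-likelihood
`x ↦ -n log (π x) - z / x`. -/
lemma neg_mul_log_pi_mul_sub_div_le {n z s t : ℝ} (hn : 0 ≤ n) (hs : 0 < s) (ht : 0 < t)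
    (h : 0 ≤ (t - s) * (n * s - z)) :
    -n * Real.log (Real.pi * t) - z / t ≤ -n * Real.log (Real.pi * s) - z / s := by
  have hlog : 1 - s / t ≤ Real.log t - Real.log s := by
    have := Real.one_sub_inv_le_log_of_pos (div_pos ht hs)
    rwa [inv_div, Real.log_div ht.ne' hs.ne'] at this
  have hmul := mul_le_mul_of_nonneg_left hlog hn
  have hrat : n * (1 - s / t) + z / t - z / s = (t - s) * (n * s - z) / (t * s) := by
    field_simp
    ring
  have hnonneg : 0 ≤ (t - s) * (n * s - z) / (t * s) := div_nonneg h (mul_pos ht hs).le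
  rw [Real.log_mul Real.pi_ne_zero ht.ne', Real.log_mul Real.pi_ne_zero hs.ne']
  linarith

/-- The GLRT log-likelihood `f(v) = −N ln(π(v P_s + σ_w²)) − z/(v P_s + σ_w²)` attains its
maximum over `[0, ∞)` at `v* = max(0, z/(N P_s) − σ_w²/P_s)`. -/
theorem glrt_ml_estimate_maximizes (N : ℕ) (hN : 1 ≤ N) (Ps σwsq z : ℝ)
    (hPs : 0 < Ps) (hσ : 0 < σwsq) (hz : 0 ≤ z) :
    ∀ v : ℝ, 0 ≤ v →
      -(N : ℝ) * Real.log (Real.pi * (v * Ps + σwsq)) - z / (v * Ps + σwsq) ≤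
      -(N : ℝ) * Real.log (Real.pi * (max 0 (z / (N * Ps) - σwsq / Ps) * Ps + σwsq)) -
        z / (max 0 (z / (N * Ps) - σwsq / Ps) * Ps + σwsq) := by
  intro v hv
  have hN' : (0 : ℝ) < N := by exact_mod_cast hN
  have hvP : 0 ≤ v * Ps := mul_nonneg hv hPs.le
  have hmax : max 0 (z / (N * Ps) - σwsq / Ps) * Ps + σwsq = max σwsq (z / N) := by
    have hcancel : (z / (N * Ps) - σwsq / Ps) * Ps = z / N - σwsq := by field_simp
    rw [max_mul_of_nonneg _ _ hPs.le, hcancel, zero_mul, ← max_add_add_right, zero_add, sub_add_cancel]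
  rw [hmax]
  refine neg_mul_log_pi_mul_sub_div_le hN'.le (lt_max_of_lt_left hσ) (by linarith) ?_
  rcases le_total σwsq (z / N) with h | h
  · rw [max_eq_right h, mul_div_cancel₀ z hN'.ne', sub_self, mul_zero]
  · rw [max_eq_left h]
    have hz' : z ≤ σwsq * N := (div_le_iff₀ hN').mp h
    exact mul_nonneg (by linarith) (by linarith)
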